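/- arXiv:1703.06175 — 2 statements merged into one kernel-verified Lean document; each statement's English description precedes it below -/
import Mathlib

section
/- Let g be a ℤ-graded Lie algebra over ℂ satisfying (P1) and (P2), and let p = ⊕_{j∈ℤ} p_j be a parabolic subalgebra of g. If p_{−k} ≠ 0 for some k > 0, then p_{−k+1} ≠ 0. -/
namespace Paper

variable {L : Type*} [LieRing L] [LieAlgebra ℂ L]

/-- A `ℤ`-graded Lie algebra over `ℂ`: a Lie algebra `L` together with an internal
direct sum decomposition `L = ⊕_{j ∈ ℤ} g_j` with `⁅g_i, g_j⁆ ⊆ g_{i+j}`. -/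
structure GradedLie (L : Type*) [LieRing L] [LieAlgebra ℂ L] where
  g : ℤ → Submodule ℂ L
  internal : DirectSum.IsInternal g
  bracket_mem : ∀ i j : ℤ, ∀ x ∈ g i, ∀ y ∈ g j, ⁅x, y⁆ ∈ g (i + j)

/-- Property (P1): `g₀` is commutative. -/
def P1 (G : GradedLie L) : Prop := ∀ x ∈ G.g 0, ∀ y ∈ G.g 0, ⁅x, y⁆ = (0 : L)

/-- Property (P2): if `a ∈ g_{-k}` (`k > 0`) and `⁅a, g₁⁆ = 0` then `a = 0`. -/
def P2 (G : GradedLie L) : Prop :=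
  ∀ k : ℤ, 0 < k → ∀ a ∈ G.g (-k), (∀ x ∈ G.g 1, ⁅a, x⁆ = (0 : L)) → a = 0

/-- A parabolic subalgebra of a graded Lie algebra, given by its graded pieces:
`p_j ⊆ g_j`, `p_j = g_j` for `j ≥ 0`, `p_j ≠ 0` for some `j < 0`, and `p` is
closed under the bracket. -/
def IsParabolic (G : GradedLie L) (p : ℤ → Submodule ℂ L) : Prop :=
  (∀ j, p j ≤ G.g j) ∧ (∀ j, 0 ≤ j → p j = G.g j) ∧
  (∃ j, j < 0 ∧ p j ≠ ⊥) ∧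
  (∀ i j : ℤ, ∀ x ∈ p i, ∀ y ∈ p j, ⁅x, y⁆ ∈ p (i + j))

theorem ne_bot_of_forall_lie_mem {R 𝔤 : Type*} [Semiring R] [LieRing 𝔤] [Module R 𝔤]
    {A C : Submodule R 𝔤} {B : Set 𝔤} (hA : A ≠ ⊥)
    (hAB : ∀ a ∈ A, (∀ x ∈ B, ⁅a, x⁆ = 0) → a = 0)
    (hC : ∀ a ∈ A, ∀ x ∈ B, ⁅a, x⁆ ∈ C) : C ≠ ⊥ := by
  obtain ⟨a, ha, ha_ne⟩ := A.ne_bot_iff.mp hA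
  obtain ⟨x, hx, hax_ne⟩ : ∃ x ∈ B, ⁅a, x⁆ ≠ 0 := by
    contrapose! ha_ne
    exact hAB a ha ha_ne
  exact C.ne_bot_iff.mpr ⟨⁅a, x⁆, hC a ha x hx, hax_ne⟩

theorem statement2_general {R 𝔤 : Type*} [Semiring R] [LieRing 𝔤] [Module R 𝔤]
    {g p : ℤ → Submodule R 𝔤}
    (hg : ∀ k : ℤ, 0 < k → ∀ a ∈ g (-k), (∀ x ∈ g 1, ⁅a, x⁆ = 0) → a = 0)
    (hp_le : ∀ j, p j ≤ g j) (hp_nonneg : ∀ j, 0 ≤ j → p j = g j)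
    (hp_lie : ∀ i j : ℤ, ∀ x ∈ p i, ∀ y ∈ p j, ⁅x, y⁆ ∈ p (i + j))
    {k : ℤ} (hk : 0 < k) (hne : p (-k) ≠ ⊥) : p (-k + 1) ≠ ⊥ := by
  have hp_one : p 1 = g 1 := hp_nonneg 1 zero_le_one
  refine ne_bot_of_forall_lie_mem (B := p 1) hne (fun a ha h => ?_) (hp_lie (-k) 1)
  exact hg k hk a (hp_le _ ha) (hp_one ▸ h)

/-- In a `ℤ`-graded Lie algebra over `ℂ` satisfying (P1) and (P2),
if `p` is a parabolic subalgebra and `p_{-k} ≠ 0` for some `k > 0`, then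
`p_{-k+1} ≠ 0`. -/
theorem statement2 (G : GradedLie L) (hP1 : P1 G) (hP2 : P2 G)
    (p : ℤ → Submodule ℂ L) (hp : IsParabolic G p) (k : ℤ) (hk : 0 < k)
    (hne : p (-k) ≠ ⊥) : p (-k + 1) ≠ ⊥ := by
  obtain ⟨hp_le, hp_nonneg, _, hp_lie⟩ := hp
  exact statement2_general hP2 hp_le hp_nonneg hp_lie hk hne

end Paper
end

section
/- Let g be a ℤ-graded Lie algebra over ℂ satisfying (P1) and (P2), and let a ∈ g_{−1} be nonzero. Then p^a is a parabolic subalgebra of g containing a, and it is the minimal such: every parabolic subalgebra of g containing a contains p^a. -/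
namespace Paper

variable {L : Type*} [LieRing L] [LieAlgebra ℂ L]

/-- Iterated brackets `[x_n, [⋯ [x_1, a] ⋯]]` with all `x_i ∈ g₀`. -/
def iterSet (G : GradedLie L) (a : L) : ℕ → Set L
  | 0 => {a}
  | n + 1 => {v | ∃ x ∈ G.g 0, ∃ z ∈ iterSet G a n, v = ⁅x, z⁆}

/-- `p^a_{-1}`: the span of all iterated brackets of `g₀`-elements with `a`. -/
noncomputable def paMinusOne (G : GradedLie L) (a : L) : Submodule ℂ L :=
  Submodule.span ℂ (⋃ n : ℕ, iterSet G a n)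

/-- Span of all brackets of elements of two subspaces. -/
noncomputable def bracketSpan (A B : Submodule ℂ L) : Submodule ℂ L :=
  Submodule.span ℂ {v | ∃ x ∈ A, ∃ y ∈ B, v = ⁅x, y⁆}

/-- The negative graded pieces of `p^a`: `paNeg G a k = p^a_{-(k+1)}`, i.e.
`p^a_{-k-1} = ⁅p^a_{-1}, p^a_{-k}⁆` (as spans). -/
noncomputable def paNeg (G : GradedLie L) (a : L) : ℕ → Submodule ℂ L
  | 0 => paMinusOne G a
  | k + 1 => bracketSpan (paMinusOne G a) (paNeg G a k)

/-- The minimal parabolic family `p^a` attached to `a ∈ g_{-1}`: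
`p^a_j = g_j` for `j ≥ 0` and the iterated bracket spans in negative degrees. -/
noncomputable def pa (G : GradedLie L) (a : L) (j : ℤ) : Submodule ℂ L :=
  if 0 ≤ j then G.g j else paNeg G a ((-j).toNat - 1)

/-!
`⁅p^a_i, p^a_j⁆ ⊆ p^a_{i+j}` is proved by downward induction on `j`, uniformly in `i`, once `j < 0`.
The case `j = -1` is the construction of `p^a`, and since `p^a_{j-1} = ⁅p^a_{-1}, p^a_j⁆`, the
Leibniz rule `⁅x, ⁅y, z⁆⁆ = ⁅⁅x, y⁆, z⁆ + ⁅y, ⁅x, z⁆⁆` gives the induction step. Minimality holds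
because every piece of `p^a` is obtained by bracketing from `a` and the `g_j` with `j ≥ 0`.
-/

section

variable {G : GradedLie L} {a : L}

theorem bracketSpan_le {A B C : Submodule ℂ L} :
    bracketSpan A B ≤ C ↔ ∀ x ∈ A, ∀ y ∈ B, ⁅x, y⁆ ∈ C := by
  refine Submodule.span_le.trans ⟨fun h x hx y hy => h ⟨x, hx, y, hy, rfl⟩, ?_⟩
  rintro h _ ⟨x, hx, y, hy, rfl⟩
  exact h x hx y hy

theorem lie_mem_bracketSpan {A B : Submodule ℂ L} {x y : L} (hx : x ∈ A) (hy : y ∈ B) :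
    ⁅x, y⁆ ∈ bracketSpan A B :=
  bracketSpan_le.1 le_rfl x hx y hy

theorem lie_mem_of_mem_bracketSpan {A B C : Submodule ℂ L} {x w : L}
    (h : ∀ y ∈ A, ∀ z ∈ B, ⁅x, ⁅y, z⁆⁆ ∈ C) (hw : w ∈ bracketSpan A B) : ⁅x, w⁆ ∈ C :=
  have hle : bracketSpan A B ≤ C.comap (LieAlgebra.ad ℂ L x : L →ₗ[ℂ] L) := bracketSpan_le.2 h
  hle hw

theorem self_mem_paMinusOne : a ∈ paMinusOne G a :=
  Submodule.subset_span (Set.mem_iUnion.2 ⟨0, rfl⟩)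

theorem lie_mem_paMinusOne {x y : L} (hx : x ∈ G.g 0) (hy : y ∈ paMinusOne G a) :
    ⁅x, y⁆ ∈ paMinusOne G a := by
  have hle : paMinusOne G a ≤ (paMinusOne G a).comap (LieAlgebra.ad ℂ L x : L →ₗ[ℂ] L) :=
    Submodule.span_le.2 <| Set.iUnion_subset fun n z hz =>
      Submodule.subset_span (Set.mem_iUnion.2 ⟨n + 1, x, hx, z, hz, rfl⟩)
  exact hle hy

theorem paMinusOne_le {C : Submodule ℂ L} (ha : a ∈ C)
    (hC : ∀ x ∈ G.g 0, ∀ y ∈ C, ⁅x, y⁆ ∈ C) : paMinusOne G a ≤ C := by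
  refine Submodule.span_le.2 (Set.iUnion_subset fun n => ?_)
  induction n with
  | zero => exact Set.singleton_subset_iff.2 ha
  | succ n ih =>
    rintro _ ⟨x, hx, z, hz, rfl⟩
    exact hC x hx z (ih hz)

theorem pa_of_nonneg {j : ℤ} (hj : 0 ≤ j) : pa G a j = G.g j :=
  if_pos hj

theorem pa_neg_one : pa G a (-1) = paMinusOne G a :=
  rfl

theorem pa_sub_one {j : ℤ} (hj : j ≤ -1) :
    pa G a (j - 1) = bracketSpan (pa G a (-1)) (pa G a j) := by
  have hindex : (-(j - 1)).toNat - 1 = (-j).toNat - 1 + 1 := by lia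
  rw [pa_neg_one, pa, pa, if_neg (by lia), if_neg (by lia), hindex, paNeg]

theorem pa_le {p : ℤ → Submodule ℂ L} (hg : ∀ j, 0 ≤ j → G.g j ≤ p j) (ha : a ∈ p (-1))
    (hp : ∀ i j : ℤ, ∀ x ∈ p i, ∀ y ∈ p j, ⁅x, y⁆ ∈ p (i + j)) (j : ℤ) : pa G a j ≤ p j := by
  have hneg_one : pa G a (-1) ≤ p (-1) :=
    paMinusOne_le ha fun x hx y hy => zero_add (-1 : ℤ) ▸ hp 0 (-1) x (hg 0 le_rfl hx) y hy
  rcases le_or_gt 0 j with hj | hj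
  · exact (pa_of_nonneg hj).trans_le (hg j hj)
  · induction j, Int.le_sub_one_of_lt hj using Int.leInductionDown with
    | base => exact hneg_one
    | pred j hj' ih =>
      rw [pa_sub_one hj', bracketSpan_le, sub_eq_neg_add]
      exact fun x hx y hy => hp (-1) j x (hneg_one hx) y (ih (by lia) hy)

theorem pa_le_g (ha : a ∈ G.g (-1)) (j : ℤ) : pa G a j ≤ G.g j :=
  pa_le (fun _ _ => le_rfl) ha G.bracket_mem j

theorem lie_mem_pa_sub_one (ha : a ∈ G.g (-1)) {j : ℤ} {y z : L} (hy : y ∈ pa G a (-1))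
    (hz : z ∈ pa G a j) : ⁅y, z⁆ ∈ pa G a (j - 1) := by
  rcases lt_trichotomy j 0 with hj | rfl | hj
  · rw [pa_sub_one (by lia)]
    exact lie_mem_bracketSpan hy hz
  · rw [pa_of_nonneg le_rfl] at hz
    rw [zero_sub, pa_neg_one, ← lie_skew]
    exact neg_mem (lie_mem_paMinusOne hz hy)
  · rw [pa_of_nonneg (by lia), sub_eq_neg_add]
    exact G.bracket_mem (-1) j y (pa_le_g ha _ hy) z (pa_le_g ha _ hz)

theorem lie_mem_pa_add_of_neg (ha : a ∈ G.g (-1)) {j : ℤ} (hj : j < 0) {i : ℤ} {x w : L}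
    (hx : x ∈ pa G a i) (hw : w ∈ pa G a j) : ⁅x, w⁆ ∈ pa G a (i + j) := by
  have lie_mem_neg_one {i : ℤ} {x y : L} (hx : x ∈ pa G a i) (hy : y ∈ pa G a (-1)) :
      ⁅x, y⁆ ∈ pa G a (i - 1) := by
    rw [← lie_skew]
    exact neg_mem (lie_mem_pa_sub_one ha hy hx)
  induction j, Int.le_sub_one_of_lt hj using Int.leInductionDown generalizing i x w with
  | base => exact lie_mem_neg_one hx hw
  | pred j hj' ih =>
    rw [pa_sub_one hj'] at hw
    refine lie_mem_of_mem_bracketSpan (fun y hy z hz => ?_) hw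
    have hxy_z : ⁅⁅x, y⁆, z⁆ ∈ pa G a (i - 1 + j) := ih (by lia) (lie_mem_neg_one hx hy) hz
    have hy_xz : ⁅y, ⁅x, z⁆⁆ ∈ pa G a (i + j - 1) := lie_mem_pa_sub_one ha hy (ih (by lia) hx hz)
    rw [leibniz_lie, ← add_sub_assoc]
    exact add_mem (sub_add_eq_add_sub i 1 j ▸ hxy_z) hy_xz

theorem lie_mem_pa_add (ha : a ∈ G.g (-1)) {i j : ℤ} {x y : L} (hx : x ∈ pa G a i)
    (hy : y ∈ pa G a j) : ⁅x, y⁆ ∈ pa G a (i + j) := by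
  rcases lt_or_ge j 0 with hj | hj
  · exact lie_mem_pa_add_of_neg ha hj hx hy
  rcases lt_or_ge i 0 with hi | hi
  · rw [← lie_skew, add_comm]
    exact neg_mem (lie_mem_pa_add_of_neg ha hi hy hx)
  · rw [pa_of_nonneg (add_nonneg hi hj)]
    exact G.bracket_mem i j x (pa_le_g ha i hx) y (pa_le_g ha j hy)

theorem isParabolic_pa (ha : a ∈ G.g (-1)) (ha0 : a ≠ 0) : IsParabolic G (pa G a) :=
  have hne_bot : pa G a (-1) ≠ ⊥ := (Submodule.ne_bot_iff _).2 ⟨a, self_mem_paMinusOne, ha0⟩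
  ⟨pa_le_g ha, fun _ => pa_of_nonneg, ⟨-1, by norm_num, hne_bot⟩,
    fun _ _ _ hx _ hy => lie_mem_pa_add ha hx hy⟩

theorem pa_le_of_isParabolic {p : ℤ → Submodule ℂ L} (hp : IsParabolic G p) (ha : a ∈ p (-1))
    (j : ℤ) : pa G a j ≤ p j :=
  have ⟨_, hnonneg, _, hlie⟩ := hp
  pa_le (fun j hj => (hnonneg j hj).ge) ha hlie j

end

theorem statement3_general (G : GradedLie L) (a : L) (ha : a ∈ G.g (-1)) (ha0 : a ≠ 0) :
    IsParabolic G (pa G a) ∧ a ∈ pa G a (-1) ∧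
    (∀ p : ℤ → Submodule ℂ L, IsParabolic G p → a ∈ p (-1) →
      ∀ j : ℤ, pa G a j ≤ p j) :=
  ⟨isParabolic_pa ha ha0, self_mem_paMinusOne, fun _ => pa_le_of_isParabolic⟩

/-- For `0 ≠ a ∈ g_{-1}`, the family `p^a` is a parabolic subalgebra
of `g` containing `a`, and it is minimal among parabolic subalgebras containing `a`. -/
theorem statement3 (G : GradedLie L) (hP1 : P1 G) (hP2 : P2 G)
    (a : L) (ha : a ∈ G.g (-1)) (ha0 : a ≠ 0) :
    IsParabolic G (pa G a) ∧ a ∈ pa G a (-1) ∧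
    (∀ p : ℤ → Submodule ℂ L, IsParabolic G p → a ∈ p (-1) →
      ∀ j : ℤ, pa G a j ≤ p j) :=
  statement3_general G a ha ha0

end Paper
end
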